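/- arXiv:2009.00446 — 3 statements merged into one kernel-verified Lean document; each statement's English description precedes it below -/
import Mathlib

section
/- For every integer m ≥ 1, (1 − 2^{2m}) ζ(2m) = (−1)^m (π^{2m}/2) ∑_{j=0}^{m−1} 𝓔(2j)/(Γ(2m−2j) Γ(2j+1)). -/
open Filter

/-- `E j` is the Euler number `𝓔(2j)`, characterized by the convergent series
`∑_{k=0}^∞ (-1)^k (k+1/2)^{-(2j+1)} = (-1)^j π^{2j+1} 𝓔(2j) / (2 Γ(2j+1))`. -/
def eulerChar (E : ℕ → ℝ) : Prop :=
  ∀ j : ℕ, Filter.Tendsto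
    (fun n => ∑ k ∈ Finset.range n, (-1 : ℝ) ^ k / ((k : ℝ) + 1/2) ^ (2*j+1))
    Filter.atTop
    (nhds ((-1 : ℝ) ^ j * Real.pi ^ (2*j+1) * E j / (2 * (Nat.factorial (2*j)))))

/-!
At `1/4` the Fourier series of `B_{2j+1}` runs over the odd integers with alternating signs, so
`𝓔(2j) = -4^{2j+1}/(2j+1) * B_{2j+1}(1/4)`. The expansion of `B_{2m}(1/4 + y)` in powers of `y` has
the coefficients `(2m choose i) B_i(1/4)`, and its odd part in `y` keeps only the odd `i`. At
`y = 1/4` it therefore expresses `B_{2m}(1/2) - B_{2m}(0)`, a known multiple of the Bernoulli number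
`B_{2m}`, through Euler numbers, and Euler's evaluation of `ζ(2m)` turns this into the formula.
-/

theorem sum_range_two_mul_of_even_eq_zero {M : Type*} [AddCommMonoid M] {f : ℕ → M}
    (hf : ∀ k, f (2 * k) = 0) (n : ℕ) :
    ∑ i ∈ Finset.range (2 * n), f i = ∑ k ∈ Finset.range n, f (2 * k + 1) := by
  induction n with
  | zero => simp
  | succ n ih =>
    rw [show 2 * (n + 1) = 2 * n + 1 + 1 by ring, Finset.sum_range_succ, Finset.sum_range_succ,
      Finset.sum_range_succ, ih, hf, add_zero]

section Taylor

open Polynomial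

theorem map_hasseDeriv {R S : Type*} [Semiring R] [Semiring S] (f : R →+* S) (k : ℕ) (p : R[X]) :
    (hasseDeriv k p).map f = hasseDeriv k (p.map f) := by
  ext n
  simp [hasseDeriv_coeff]

theorem aeval_add_eq_sum_hasseDeriv {R A : Type*} [CommSemiring R] [CommSemiring A] [Algebra R A]
    {p : R[X]} {n : ℕ} (hn : p.natDegree < n) (x y : A) :
    aeval (x + y) p = ∑ i ∈ Finset.range n, aeval x (hasseDeriv i p) * y ^ i := by
  have hdeg : (taylor x (p.map (algebraMap R A))).natDegree < n := by
    rw [natDegree_taylor]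
    exact natDegree_map_le.trans_lt hn
  rw [add_comm, ← eval_map_algebraMap, ← taylor_eval, eval_eq_sum_range' hdeg]
  simp only [taylor_coeff, ← map_hasseDeriv, eval_map_algebraMap]

end Taylor

section BernoulliPolynomials

open Polynomial

theorem natDegree_bernoulli_le (n : ℕ) : (Polynomial.bernoulli n).natDegree ≤ n :=
  natDegree_le_iff_coeff_eq_zero.2 fun i hi => by rw [coeff_bernoulli, if_neg hi.not_ge]

theorem hasseDeriv_bernoulli (n k : ℕ) :
    hasseDeriv k (Polynomial.bernoulli n) = n.choose k • Polynomial.bernoulli (n - k) := by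
  ext i
  rw [hasseDeriv_coeff, coeff_smul, coeff_bernoulli, coeff_bernoulli, nsmul_eq_mul]
  rcases le_or_gt (i + k) n with h | h
  · have hchoose : (n.choose (i + k) * (i + k).choose k : ℚ) = n.choose k * (n - k).choose i := by
      exact_mod_cast Nat.add_sub_cancel i k ▸ Nat.choose_mul (n := n) (Nat.le_add_left k i)
    rw [if_pos h, if_pos (by omega), show n - k - i = n - (i + k) by omega]
    linear_combination _root_.bernoulli (n - (i + k)) * hchoose
  · rcases le_or_gt k n with hk | hk
    · rw [if_neg (by omega), if_neg (by omega), mul_zero, mul_zero]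
    · rw [if_neg (by omega), Nat.choose_eq_zero_of_lt hk, mul_zero, Nat.cast_zero, zero_mul]

variable {A : Type*} [CommRing A] [Algebra ℚ A]

theorem aeval_add_bernoulli (n : ℕ) (x y : A) :
    aeval (x + y) (Polynomial.bernoulli n) =
      ∑ i ∈ Finset.range (n + 1),
        n.choose i * aeval x (Polynomial.bernoulli i) * y ^ (n - i) := by
  rw [aeval_add_eq_sum_hasseDeriv (Nat.lt_succ_of_le (natDegree_bernoulli_le n)),
    ← Finset.sum_range_reflect]
  refine Finset.sum_congr rfl fun i hi => ?_
  have hi : i ≤ n := Finset.mem_range_succ_iff.1 hi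
  rw [hasseDeriv_bernoulli, map_nsmul, nsmul_eq_mul, Nat.succ_sub_one, Nat.choose_symm hi,
    Nat.sub_sub_self hi]

theorem aeval_add_sub_aeval_sub_bernoulli_two_mul (m : ℕ) (x y : A) :
    aeval (x + y) (Polynomial.bernoulli (2 * m)) - aeval (x - y) (Polynomial.bernoulli (2 * m)) =
      2 * ∑ j ∈ Finset.range m, (2 * m).choose (2 * j + 1) *
        aeval x (Polynomial.bernoulli (2 * j + 1)) * y ^ (2 * m - (2 * j + 1)) := by
  have hterm_even (k : ℕ) : y ^ (2 * m - 2 * k) - (-y) ^ (2 * m - 2 * k) = 0 := by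
    rw [Even.neg_pow ⟨m - k, by omega⟩, sub_self]
  have hterm_odd (j : ℕ) (hj : j < m) :
      y ^ (2 * m - (2 * j + 1)) - (-y) ^ (2 * m - (2 * j + 1)) =
        2 * y ^ (2 * m - (2 * j + 1)) := by
    rw [Odd.neg_pow ⟨m - j - 1, by omega⟩]
    ring
  rw [sub_eq_add_neg x, aeval_add_bernoulli, aeval_add_bernoulli, ← Finset.sum_sub_distrib]
  simp only [← mul_sub]
  rw [Finset.sum_range_succ, hterm_even m, mul_zero, add_zero,
    sum_range_two_mul_of_even_eq_zero fun k => by rw [hterm_even, mul_zero], Finset.mul_sum]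
  refine Finset.sum_congr rfl fun j hj => ?_
  rw [hterm_odd j (Finset.mem_range.1 hj)]
  ring

end BernoulliPolynomials

theorem sum_choose_mul_bernoulliFun_quarter (m : ℕ) :
    ∑ j ∈ Finset.range m, (2 * m).choose (2 * j + 1) * bernoulliFun (2 * j + 1) (1 / 4) *
      (1 / 4) ^ (2 * m - (2 * j + 1)) = (1 / 2 ^ (2 * m) - 1) * (bernoulli (2 * m) : ℝ) := by
  have h := aeval_add_sub_aeval_sub_bernoulli_two_mul m (1 / 4 : ℝ) (1 / 4)
  simp only [← Polynomial.eval_map_algebraMap, ← bernoulliFun.eq_1] at h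
  rw [sub_self, show (1 / 4 + 1 / 4 : ℝ) = 2⁻¹ by norm_num, bernoulliFun_eval_half,
    bernoulliFun_eval_zero] at h
  linear_combination -h / 2

theorem tendsto_sum_neg_one_pow_div_odd_pow (j : ℕ) :
    Tendsto (fun n => ∑ k ∈ Finset.range n, (-1 : ℝ) ^ k / (2 * (k : ℝ) + 1) ^ (2 * j + 1)) atTop
      (nhds ((-1 : ℝ) ^ (j + 1) * (2 * Real.pi) ^ (2 * j + 1) / 2 / (2 * j + 1).factorial *
        bernoulliFun (2 * j + 1) (1 / 4))) := by
  rcases Nat.eq_zero_or_pos j with rfl | hj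
  -- The Fourier series of `B₁` converges only conditionally; at `1/4` it is the Leibniz series.
  · convert Real.tendsto_sum_pi_div_four using 2
    · simp only [mul_zero, zero_add, pow_one]
    · norm_num [bernoulliFun_one]
      ring
  · have hsin_even (k : ℕ) : Real.sin (2 * Real.pi * (2 * k : ℕ) * (1 / 4)) = 0 := by
      rw [← Real.sin_nat_mul_pi k]
      push_cast
      ring_nf
    have hsin_odd (k : ℕ) : Real.sin (2 * Real.pi * (2 * k + 1 : ℕ) * (1 / 4)) = (-1) ^ k := by
      rw [← Real.cos_nat_mul_pi k, ← Real.sin_add_pi_div_two]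
      push_cast
      ring_nf
    have hfourier := (hasSum_one_div_nat_pow_mul_sin hj.ne' (x := 1 / 4)
      (by constructor <;> norm_num)).tendsto_sum_nat
    refine (hfourier.comp (tendsto_id.const_mul_atTop' two_pos)).congr fun n => ?_
    simp only [Function.comp_apply, id]
    rw [sum_range_two_mul_of_even_eq_zero fun k => by rw [hsin_even, mul_zero]]
    refine Finset.sum_congr rfl fun k _ => ?_
    rw [hsin_odd, one_div_mul_eq_div]
    push_cast
    rfl

namespace eulerChar

variable {E : ℕ → ℝ}

theorem two_mul_add_one_mul_eq (hE : eulerChar E) (j : ℕ) :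
    (2 * j + 1) * E j = -4 ^ (2 * j + 1) * bernoulliFun (2 * j + 1) (1 / 4) := by
  have hscaled : Tendsto
      (fun n => ∑ k ∈ Finset.range n, (-1 : ℝ) ^ k / ((k : ℝ) + 1 / 2) ^ (2 * j + 1)) atTop
      (nhds (2 ^ (2 * j + 1) * ((-1 : ℝ) ^ (j + 1) * (2 * Real.pi) ^ (2 * j + 1) / 2 /
        (2 * j + 1).factorial * bernoulliFun (2 * j + 1) (1 / 4)))) := by
    refine ((tendsto_sum_neg_one_pow_div_odd_pow j).const_mul _).congr fun n => ?_
    rw [Finset.mul_sum]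
    refine Finset.sum_congr rfl fun k _ => ?_
    rw [show 2 * (k : ℝ) + 1 = 2 * (k + 1 / 2) by ring, mul_pow]
    field_simp
  have hlimit := tendsto_nhds_unique (hE j) hscaled
  have hfour : (4 : ℝ) ^ (2 * j + 1) = 2 ^ (2 * j + 1) * 2 ^ (2 * j + 1) := by
    rw [← mul_pow]
    norm_num
  rw [Nat.factorial_succ, mul_pow, pow_succ (-1 : ℝ)] at hlimit
  push_cast at hlimit
  rw [hfour]
  have := Real.pi_ne_zero
  field_simp at hlimit
  linear_combination hlimit

theorem sum_div_factorial_mul_factorial (hE : eulerChar E) (m : ℕ) :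
    ∑ j ∈ Finset.range m, E j / ((2 * m - 2 * j - 1).factorial * (2 * j).factorial) =
      2 ^ (2 * m) * (2 ^ (2 * m) - 1) * (bernoulli (2 * m) : ℝ) / (2 * m).factorial := by
  have hterm (j : ℕ) (hj : j < m) :
      E j / ((2 * m - 2 * j - 1).factorial * (2 * j).factorial) =
        -4 ^ (2 * m) / (2 * m).factorial * ((2 * m).choose (2 * j + 1) *
          bernoulliFun (2 * j + 1) (1 / 4) * (1 / 4) ^ (2 * m - (2 * j + 1))) := by
    have hj : 2 * j + 1 ≤ 2 * m := by omega
    have hfour : (4 : ℝ) ^ (2 * m) = 4 ^ (2 * j + 1) * 4 ^ (2 * m - (2 * j + 1)) := by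
      rw [← pow_add, Nat.add_sub_cancel' hj]
    rw [Nat.cast_choose ℝ hj, Nat.sub_sub, Nat.factorial_succ, hfour, one_div_pow]
    push_cast
    field_simp
    linear_combination hE.two_mul_add_one_mul_eq j
  rw [Finset.sum_congr rfl fun j hj => hterm j (Finset.mem_range.1 hj), ← Finset.mul_sum,
    sum_choose_mul_bernoulliFun_quarter, show (4 : ℝ) = 2 * 2 by norm_num, mul_pow]
  field_simp
  ring

end eulerChar

theorem one_sub_two_pow_mul_riemannZeta_two_mul_nat {m : ℕ} (hm : m ≠ 0) :
    (1 - (2 : ℂ) ^ (2 * m)) * riemannZeta (2 * m) =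
      (-1) ^ m * ((Real.pi : ℂ) ^ (2 * m) / 2) *
        (2 ^ (2 * m) * (2 ^ (2 * m) - 1) * bernoulli (2 * m) / (2 * m).factorial) := by
  rw [riemannZeta_two_mul_nat hm, pow_succ (-1 : ℂ), ← pow_sub_one_mul (by omega : 2 * m ≠ 0) 2]
  ring

theorem Gamma_natCast_sub_natCast {k n : ℕ} (h : k < n) :
    Complex.Gamma ((n : ℂ) - k) = (n - k - 1).factorial := by
  rw [← Complex.Gamma_nat_eq_factorial, ← Nat.cast_add_one, Nat.sub_add_cancel (by omega),
    Nat.cast_sub h.le]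

/-- For every `m ≥ 1`,
`(1 - 2^{2m}) ζ(2m) = (-1)^m (π^{2m}/2) ∑_{j=0}^{m-1} 𝓔(2j)/(Γ(2m-2j) Γ(2j+1))`. -/
theorem stmt_4 (m : ℕ) (hm : 1 ≤ m) (E : ℕ → ℝ) (hE : eulerChar E) :
    (1 - (2 : ℂ) ^ (2*m)) * riemannZeta (2 * (m : ℂ)) =
      (-1) ^ m * ((Real.pi : ℂ) ^ (2*m) / 2) *
        ∑ j ∈ Finset.range m,
          (E j : ℂ) / (Complex.Gamma (2 * (m : ℂ) - 2 * (j : ℂ)) *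
            Complex.Gamma (2 * (j : ℂ) + 1)) := by
  have hGamma (j : ℕ) (hj : j < m) :
      Complex.Gamma (2 * (m : ℂ) - 2 * (j : ℂ)) * Complex.Gamma (2 * (j : ℂ) + 1) =
        (2 * m - 2 * j - 1).factorial * (2 * j).factorial := by
    rw [← Gamma_natCast_sub_natCast (by omega), ← Complex.Gamma_nat_eq_factorial]
    push_cast
    rfl
  have hsum : ∑ j ∈ Finset.range m, (E j : ℂ) /
        (Complex.Gamma (2 * (m : ℂ) - 2 * (j : ℂ)) * Complex.Gamma (2 * (j : ℂ) + 1)) =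
      2 ^ (2 * m) * (2 ^ (2 * m) - 1) * bernoulli (2 * m) / (2 * m).factorial := by
    rw [Finset.sum_congr rfl fun j hj => by rw [hGamma j (Finset.mem_range.1 hj)]]
    exact_mod_cast congrArg ((↑) : ℝ → ℂ) (hE.sum_div_factorial_mul_factorial m)
  rw [hsum, one_sub_two_pow_mul_riemannZeta_two_mul_nat (Nat.one_le_iff_ne_zero.1 hm)]
end

section
/- For every integer m ≥ 1, the series ∑_{k=0}^∞ [E_{−2m}(iπ(k+1/2)) + E_{−2m}(−iπ(k+1/2))] converges and its sum equals 0. -/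
open Filter

/-- The generalized exponential integral of nonpositive integer order `-p`:
`E_{-p}(z) = Γ(p+1) e^{-z} z^{-p-1} ∑_{j=0}^{p} z^j/Γ(j+1)`. -/
noncomputable def expIntNeg (p : ℕ) (z : ℂ) : ℂ :=
  (Nat.factorial p : ℂ) * Complex.exp (-z) * z ^ (-(p : ℤ) - 1) *
    ∑ j ∈ Finset.range (p + 1), z ^ j / (Nat.factorial j : ℂ)

/-!
For even `p` the pair `E_{-p}(z) + E_{-p}(-z)` is `-∫_{-1}^{1} t^p e^{-zt} dt`. At
`z = iπ(k + 1/2)` write `t^p = sin(πt/2) g(t)`: the sum over `k < n` telescopes under the integral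
to a constant multiple of `∫ g - ∫ e^{-iπnt} g(t) dt`. Since `t^p` cancels the simple zero of the
sine at the origin, `g` is bounded on `[-1, 1]`, so the second integral tends to zero by the
Riemann-Lebesgue lemma; the first vanishes because `g` is odd.
-/

section

open Complex MeasureTheory Set
open scoped Interval Nat Real Topology

lemma hasDerivAt_exp_neg_mul_sum_pow_div_factorial (p : ℕ) (x : ℂ) :
    HasDerivAt (fun x ↦ exp (-x) * ∑ j ∈ Finset.range (p + 1), x ^ j / (j ! : ℂ))
      (-(exp (-x) * (x ^ p / (p ! : ℂ)))) x := by
  have hexp : HasDerivAt (fun x : ℂ ↦ exp (-x)) (-exp (-x)) x := by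
    simpa using (hasDerivAt_neg x).cexp
  induction p with
  | zero => simpa using hexp
  | succ p ih =>
    have hterm := hexp.fun_mul ((hasDerivAt_pow (p + 1) x).div_const ((p + 1)! : ℂ))
    have hcoeff : ((p + 1 : ℕ) : ℂ) * x ^ p / ((p + 1)! : ℂ) = x ^ p / (p ! : ℂ) := by
      rw [Nat.factorial_succ, Nat.cast_mul,
        mul_div_mul_left _ _ (Nat.cast_ne_zero.2 p.succ_ne_zero)]
    simp only [Finset.sum_range_succ _ (p + 1), mul_add]
    refine (ih.fun_add hterm).congr_deriv ?_
    rw [Nat.add_sub_cancel, hcoeff]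
    ring

lemma integral_pow_mul_exp_neg_mul (p : ℕ) {z : ℂ} (hz : z ≠ 0) {a b : ℝ} (ha : a ≠ 0)
    (hb : b ≠ 0) :
    ∫ t in a..b, (t : ℂ) ^ p * exp (-(z * t)) =
      a ^ (p + 1) * expIntNeg p (z * a) - b ^ (p + 1) * expIntNeg p (z * b) := by
  set F : ℂ → ℂ := fun x ↦ exp (-x) * ∑ j ∈ Finset.range (p + 1), x ^ j / (j ! : ℂ) with hF
  have hderiv (t : ℝ) : HasDerivAt (fun t : ℝ ↦ -(p ! / z ^ (p + 1)) * F (z * t))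
      ((t : ℂ) ^ p * exp (-(z * t))) t := by
    have hmul : HasDerivAt (fun t : ℝ ↦ z * (t : ℂ)) z t := by
      simpa using (ofRealCLM.hasDerivAt (x := t)).const_mul z
    refine (((hasDerivAt_exp_neg_mul_sum_pow_div_factorial p (z * t)).comp t hmul).const_mul
      (-(p ! / z ^ (p + 1)))).congr_deriv ?_
    have hp : (p ! : ℂ) ≠ 0 := Nat.cast_ne_zero.2 p.factorial_ne_zero
    rw [mul_pow, pow_succ']
    field_simp
  have hexpInt {c : ℝ} (hc : c ≠ 0) :
      (c : ℂ) ^ (p + 1) * expIntNeg p (z * c) = p ! / z ^ (p + 1) * F (z * c) := by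
    have hc' : (c : ℂ) ≠ 0 := ofReal_ne_zero.2 hc
    have hpow : (z * c) ^ (-(p : ℤ) - 1) = ((z * c) ^ (p + 1))⁻¹ := by
      rw [← neg_add', zpow_neg, ← Nat.cast_succ, zpow_natCast]
    rw [expIntNeg, hpow, hF, mul_pow z]
    field_simp
  rw [intervalIntegral.integral_eq_sub_of_hasDerivAt (fun t _ ↦ hderiv t)
    (Continuous.intervalIntegrable (by fun_prop) _ _), hexpInt ha, hexpInt hb]
  ring

lemma expIntNeg_add_expIntNeg_neg {p : ℕ} (hp : Even p) {z : ℂ} (hz : z ≠ 0) :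
    expIntNeg p z + expIntNeg p (-z) =
      -∫ t in (-1 : ℝ)..1, (t : ℂ) ^ p * exp (-(z * t)) := by
  rw [integral_pow_mul_exp_neg_mul p hz (by simp) one_ne_zero]
  simp [hp.add_one.neg_one_pow]

lemma abs_le_abs_sin_pi_mul_div_two {t : ℝ} (ht : |t| ≤ 1) : |t| ≤ |Real.sin (π * t / 2)| := by
  have habs : |π * t / 2| = π / 2 * |t| := by
    rw [abs_div, abs_mul, abs_of_pos Real.pi_pos, abs_two, mul_div_right_comm]
  calc |t| = 2 / π * |π * t / 2| := by rw [habs]; field_simp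
    _ ≤ |Real.sin (π * t / 2)| :=
      Real.mul_abs_le_abs_sin (habs.trans_le (mul_le_of_le_one_right (by positivity) ht))

lemma sin_mul_pow_div_sin {p : ℕ} (hp : p ≠ 0) {t : ℝ} (ht : |t| ≤ 1) :
    Real.sin (π * t / 2) * (t ^ p / Real.sin (π * t / 2)) = t ^ p := by
  refine mul_div_cancel_of_imp' fun hsin ↦ ?_
  have ht0 : t = 0 := by simpa [hsin] using abs_le_abs_sin_pi_mul_div_two ht
  rw [ht0, zero_pow hp]

lemma intervalIntegrable_pow_div_sin {p : ℕ} (hp : p ≠ 0) :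
    IntervalIntegrable (fun t ↦ t ^ p / Real.sin (π * t / 2)) volume (-1) 1 := by
  refine (intervalIntegrable_const (c := (1 : ℝ))).mono_fun'
    (Measurable.aestronglyMeasurable (by fun_prop)) ?_
  refine ae_restrict_of_forall_mem measurableSet_uIoc fun t ht ↦ ?_
  rw [uIoc_of_le (by norm_num)] at ht
  have ht1 : |t| ≤ 1 := abs_le.2 ⟨ht.1.le, ht.2⟩
  simp only [norm_div, norm_pow, Real.norm_eq_abs]
  refine div_le_one_of_le₀ ?_ (abs_nonneg _)
  exact (pow_le_of_le_one (abs_nonneg t) ht1 hp).trans (abs_le_abs_sin_pi_mul_div_two ht1)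

lemma two_I_mul_sin_mul_exp (ω k t : ℂ) :
    2 * I * sin (ω * t / 2) * exp (-(I * ω * (k + 1 / 2) * t)) =
      exp (-(I * ω * k * t)) - exp (-(I * ω * (k + 1) * t)) := by
  have hsin : 2 * I * sin (ω * t / 2) = exp (ω * t / 2 * I) - exp (-(ω * t / 2) * I) := by
    linear_combination I * two_sin (ω * t / 2) +
      (exp (-(ω * t / 2) * I) - exp (ω * t / 2 * I)) * I_mul_I
  rw [hsin, sub_mul, ← exp_add, ← exp_add]
  ring_nf

variable {E : Type*} [NormedAddCommGroup E]

lemma intervalIntegral_eq_zero_of_odd [NormedSpace ℝ E] {f : ℝ → E} (hf : f.Odd) (a : ℝ) :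
    ∫ t in -a..a, f t = 0 := by
  have hneg := intervalIntegral.integral_comp_neg (a := -a) (b := a) f
  simp only [hf.eq, intervalIntegral.integral_neg, neg_neg] at hneg
  have : IsAddTorsionFree E := .of_isTorsionFree ℝ E
  exact self_eq_neg.1 hneg.symm

variable [NormedSpace ℂ E]

lemma tendsto_setIntegral_exp_smul_cocompact {s : Set ℝ} (hs : MeasurableSet s) (f : ℝ → E) :
    Tendsto (fun w : ℝ ↦ ∫ t in s, exp (-(I * w * t)) • f t) (cocompact ℝ) (𝓝 0) := by
  have hscale : Tendsto (fun w : ℝ ↦ w * (2 * π)⁻¹) (cocompact ℝ) (cocompact ℝ) := by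
    simpa only [Metric.cobounded_eq_cocompact] using
      tendsto_mul_right_cobounded (inv_ne_zero Real.two_pi_pos.ne')
  refine ((Real.tendsto_integral_exp_smul_cocompact (s.indicator f)).comp hscale).congr fun w ↦ ?_
  rw [← integral_indicator hs]
  refine integral_congr_ae (.of_forall fun t ↦ ?_)
  simp only [indicator_smul, Circle.smul_def, Real.fourierChar_apply]
  congr 2
  push_cast
  field_simp

lemma tendsto_intervalIntegral_exp_smul_cocompact (f : ℝ → E) (a b : ℝ) :
    Tendsto (fun w : ℝ ↦ ∫ t in a..b, exp (-(I * w * t)) • f t) (cocompact ℝ) (𝓝 0) := by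
  simpa only [intervalIntegral, sub_zero] using
    (tendsto_setIntegral_exp_smul_cocompact measurableSet_Ioc f).sub
      (tendsto_setIntegral_exp_smul_cocompact measurableSet_Ioc f)

lemma tendsto_sum_integral_sin_mul_exp_smul {ω : ℝ} (hω : ω ≠ 0) {g : ℝ → E} {a b : ℝ}
    (hg : IntervalIntegrable g volume a b) :
    Tendsto (fun n ↦ ∑ k ∈ Finset.range n,
        ∫ t in a..b, (2 * I * sin (ω * t / 2) * exp (-(I * ω * (k + 1 / 2) * t))) • g t)
      atTop (𝓝 (∫ t in a..b, g t)) := by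
  set c : ℕ → E := fun k ↦ ∫ t in a..b, exp (-(I * (k * ω : ℝ) * t)) • g t with hc
  have hint (k : ℕ) :
      IntervalIntegrable (fun t : ℝ ↦ exp (-(I * (k * ω : ℝ) * t)) • g t) volume a b :=
    hg.continuousOn_smul (by fun_prop)
  have hterm (k : ℕ) :
      ∫ t in a..b, (2 * I * sin (ω * t / 2) * exp (-(I * ω * (k + 1 / 2) * t))) • g t =
        c k - c (k + 1) := by
    rw [hc, ← intervalIntegral.integral_sub (hint k) (hint (k + 1))]
    refine intervalIntegral.integral_congr fun t _ ↦ ?_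
    simp only [two_I_mul_sin_mul_exp, sub_smul]
    push_cast
    ring_nf
  have hc0 : c 0 = ∫ t in a..b, g t := by simp [hc]
  have hfreq : Tendsto (fun n : ℕ ↦ n * ω) atTop (cocompact ℝ) := by
    rw [← Metric.cobounded_eq_cocompact]
    exact (tendsto_mul_right_cobounded hω).comp tendsto_natCast_atTop_cobounded
  have hlim : Tendsto c atTop (𝓝 0) :=
    (tendsto_intervalIntegral_exp_smul_cocompact g a b).comp hfreq
  simp only [hterm, Finset.sum_range_sub', hc0]
  simpa only [sub_zero] using hlim.const_sub (∫ t in a..b, g t)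

lemma tendsto_sum_integral_even_pow_mul_exp {p : ℕ} (hp : Even p) (hp0 : p ≠ 0) :
    Tendsto (fun n ↦ ∑ k ∈ Finset.range n,
        ∫ t in (-1 : ℝ)..1, (t : ℂ) ^ p * exp (-(I * π * (k + 1 / 2) * t)))
      atTop (𝓝 0) := by
  set g : ℝ → ℂ := fun t ↦ (2 * I)⁻¹ * (t ^ p / Real.sin (π * t / 2) : ℝ) with hg
  have hodd : g.Odd := fun t ↦ by
    simp [hg, hp.neg_pow, neg_div, div_neg]
  have hint : IntervalIntegrable g volume (-1) 1 :=
    have hreal := intervalIntegrable_pow_div_sin hp0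
    IntervalIntegrable.const_mul ⟨hreal.1.ofReal, hreal.2.ofReal⟩ _
  have hlim := tendsto_sum_integral_sin_mul_exp_smul Real.pi_ne_zero hint
  rw [intervalIntegral_eq_zero_of_odd hodd] at hlim
  refine hlim.congr fun n ↦ Finset.sum_congr rfl fun k _ ↦ ?_
  refine intervalIntegral.integral_congr fun t ht ↦ ?_
  rw [uIcc_of_le (by norm_num)] at ht
  have hcancel : sin (π * t / 2) * ((t ^ p / Real.sin (π * t / 2) : ℝ) : ℂ) = (t : ℂ) ^ p := by
    exact_mod_cast sin_mul_pow_div_sin hp0 (abs_le.2 ht)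
  simp only [hg, smul_eq_mul, ← hcancel]
  field_simp

end

/-- For every `m ≥ 1`, the series
`∑_{k=0}^∞ [E_{-2m}(iπ(k+1/2)) + E_{-2m}(-iπ(k+1/2))]` converges to `0`. -/
theorem stmt_6 (m : ℕ) (hm : 1 ≤ m) :
    Tendsto (fun n => ∑ k ∈ Finset.range n,
        (expIntNeg (2*m) (Complex.I * (Real.pi : ℂ) * ((k : ℂ) + 1/2)) +
          expIntNeg (2*m) (-(Complex.I * (Real.pi : ℂ) * ((k : ℂ) + 1/2)))))
      atTop (nhds 0) := by
  have hlim := (tendsto_sum_integral_even_pow_mul_exp (even_two_mul m) (by lia)).neg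
  simp only [← Finset.sum_neg_distrib, neg_zero] at hlim
  refine hlim.congr fun n ↦ Finset.sum_congr rfl fun k _ ↦ ?_
  have hk : (k : ℂ) + 1 / 2 ≠ 0 := by
    simpa using Complex.ofReal_ne_zero.2 (by positivity : (k : ℝ) + 1 / 2 ≠ 0)
  have hz : Complex.I * (Real.pi : ℂ) * ((k : ℂ) + 1 / 2) ≠ 0 :=
    mul_ne_zero (mul_ne_zero Complex.I_ne_zero (Complex.ofReal_ne_zero.2 Real.pi_ne_zero)) hk
  exact (expIntNeg_add_expIntNeg_neg (even_two_mul m) hz).symm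
end

section
/- For every integer n ≥ 0, ∫_{−π/2}^{π/2} sin((π/2) cos θ + (2n−1)θ) · e^{−(π/2) sin θ} / (cosh(π sin θ) − cos(π cos θ)) dθ = (−1)^n B_{2n} π^{2n} (2^{1−2n} − 1)/Γ(2n+1). -/
/-!
Put `z = r exp (iθ)` with `0 < r < π`. Averaging the integrand over `θ ↦ -θ` turns it into half the
real part of `exp (-i(2n-1)θ) / sin z = r ^ (2n-1) * z ^ (-2n) * (z / sin z)`, an even function of
`z`. Its integral over the half circle is therefore half of the one over the full circle, which by
Cauchy's formula is a Taylor coefficient of `z / sin z`. That function is a combination of dilates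
of the Bernoulli generating function `t / (exp t - 1)`, so the coefficient is explicit in `B_{2n}`.
-/

open Complex MeasureTheory Metric Real Set
open scoped Nat ComplexConjugate

theorem iteratedDeriv_comp_mul_left {𝕜 F : Type*} [NontriviallyNormedField 𝕜]
    [NormedAddCommGroup F] [NormedSpace 𝕜 F] (n : ℕ) (f : 𝕜 → F) (c x : 𝕜) :
    iteratedDeriv n (fun y ↦ f (c * y)) x = c ^ n • iteratedDeriv n f (c * x) := by
  induction n generalizing x with
  | zero => simp
  | succ n ih =>
    rw [iteratedDeriv_succ, funext ih, deriv_fun_const_smul_field,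
      deriv_comp_mul_left c (iteratedDeriv n f), smul_smul, ← pow_succ, ← iteratedDeriv_succ]

theorem eq_bernoulli_of_sum_choose_mul {R : Type*} [Field R] [CharZero R] {a : ℕ → R}
    (ha : ∀ n, ∑ k ∈ Finset.range n, n.choose k * a k = if n = 1 then 1 else 0) (n : ℕ) :
    a n = bernoulli n := by
  induction n using Nat.strong_induction_on with
  | _ n ih =>
    have hB : ∑ k ∈ Finset.range (n + 1), ((n + 1).choose k : R) * bernoulli k =
        if n + 1 = 1 then 1 else 0 := by
      have hcast := congrArg (Rat.cast : ℚ → R) (sum_bernoulli (n + 1))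
      push_cast at hcast
      rw [hcast]
      simp [apply_ite]
    have hsum := (ha (n + 1)).trans hB.symm
    rw [Finset.sum_range_succ, Finset.sum_range_succ,
      Finset.sum_congr rfl fun k hk ↦ by rw [ih k (Finset.mem_range.1 hk)]] at hsum
    have hn : ((n + 1).choose n : R) ≠ 0 := by
      exact_mod_cast (Nat.choose_pos n.le_succ).ne'
    exact mul_left_cancel₀ hn (add_left_cancel hsum)

theorem dslope_exp_zero_ne_zero {t : ℂ} (ht : ‖t‖ < 2 * π) : dslope Complex.exp 0 t ≠ 0 := by
  intro h
  have hexp : Complex.exp t = 1 := by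
    rw [← sub_eq_zero, ← Complex.exp_zero, ← sub_smul_dslope, h, smul_zero]
  obtain ⟨k, rfl⟩ := Complex.exp_eq_one_iff.1 hexp
  have hk : k = 0 := by
    have hk_norm : |(k : ℝ)| * (2 * π) < 2 * π := by simpa [abs_of_pos pi_pos] using ht
    have hk_lt : |(k : ℝ)| < 1 := by nlinarith [pi_pos]
    exact Int.abs_lt_one_iff.1 (by exact_mod_cast hk_lt)
  simp [hk] at h

/-- The exponential generating function `t ↦ t / (exp t - 1)` of the Bernoulli numbers. Writing it
as an inverted `dslope` gives it the right value `1` at the removable singularity `t = 0`. -/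
noncomputable def bernoulliGenFun (t : ℂ) : ℂ :=
  (dslope Complex.exp 0 t)⁻¹

theorem bernoulliGenFun_mul_exp_sub_one {t : ℂ} (ht : ‖t‖ < 2 * π) :
    bernoulliGenFun t * (Complex.exp t - 1) = t := by
  have hslope : t * dslope Complex.exp 0 t = Complex.exp t - 1 := by
    simpa using sub_smul_dslope Complex.exp 0 t
  rw [bernoulliGenFun, ← hslope, mul_comm t, inv_mul_cancel_left₀ (dslope_exp_zero_ne_zero ht)]

theorem differentiableOn_bernoulliGenFun :
    DifferentiableOn ℂ bernoulliGenFun (ball 0 (2 * π)) := by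
  refine DifferentiableOn.inv ?_ fun t ht ↦ dslope_exp_zero_ne_zero (by simpa using ht)
  exact (differentiableOn_dslope (ball_mem_nhds _ two_pi_pos)).2 differentiable_exp.differentiableOn

theorem analyticAt_bernoulliGenFun_zero : AnalyticAt ℂ bernoulliGenFun 0 :=
  differentiableOn_bernoulliGenFun.analyticAt (ball_mem_nhds _ two_pi_pos)

theorem iteratedDeriv_exp_sub_one_zero (n : ℕ) :
    iteratedDeriv n (fun t ↦ Complex.exp t - 1) 0 = if n = 0 then 0 else 1 := by
  rw [iteratedDeriv_fun_sub Complex.contDiff_exp.contDiffAt contDiffAt_const,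
    iteratedDeriv_eq_iterate, Complex.iter_deriv_exp, iteratedDeriv_const]
  split_ifs <;> simp

theorem iteratedDeriv_bernoulliGenFun_zero (n : ℕ) :
    iteratedDeriv n bernoulliGenFun 0 = bernoulli n := by
  refine eq_bernoulli_of_sum_choose_mul (a := (iteratedDeriv · bernoulliGenFun 0)) (fun m ↦ ?_) n
  have hprod : bernoulliGenFun * (fun t ↦ Complex.exp t - 1) =ᶠ[nhds 0] fun t ↦ t := by
    filter_upwards [ball_mem_nhds (0 : ℂ) two_pi_pos] with t ht
    exact bernoulliGenFun_mul_exp_sub_one (by simpa using ht)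
  have hleibniz := iteratedDeriv_mul (n := m) analyticAt_bernoulliGenFun_zero.contDiffAt
    (g := fun t ↦ Complex.exp t - 1) (by fun_prop)
  rw [hprod.iteratedDeriv_eq, iteratedDeriv_fun_id_zero, Finset.sum_range_succ, Nat.sub_self,
    iteratedDeriv_exp_sub_one_zero, if_pos rfl, mul_zero, add_zero] at hleibniz
  rw [hleibniz]
  refine Finset.sum_congr rfl fun k hk ↦ ?_
  rw [iteratedDeriv_exp_sub_one_zero,
    if_neg (Nat.sub_ne_zero_of_lt (Finset.mem_range.1 hk)), mul_one]

/-- The function `z ↦ z / sin z` on `‖z‖ < π`, with its removable singularity at `z = 0` filled in.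
It is written as `2 i z / (exp (i z) - 1) - 2 i z / (exp (2 i z) - 1)`, so that its Taylor
coefficients can be read off from those of `bernoulliGenFun`. -/
noncomputable def idDivSin (z : ℂ) : ℂ :=
  2 * bernoulliGenFun (I * z) - bernoulliGenFun (2 * I * z)

theorem idDivSin_mul_sin {z : ℂ} (hz : ‖z‖ < π) : idDivSin z * Complex.sin z = z := by
  have h₁ := bernoulliGenFun_mul_exp_sub_one (t := I * z) (by simpa using by linarith [pi_pos])
  have h₂ := bernoulliGenFun_mul_exp_sub_one (t := 2 * I * z) (by simpa using hz)
  have hsq : Complex.exp (2 * I * z) = Complex.exp (I * z) ^ 2 := by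
    rw [← Complex.exp_nat_mul]; congr 1; push_cast; ring
  have hsin : Complex.sin z * Complex.exp (I * z) = (1 - Complex.exp (I * z) ^ 2) * I / 2 := by
    have hinv : Complex.exp (-z * I) * Complex.exp (I * z) = 1 := by
      rw [← Complex.exp_add, neg_mul, mul_comm I, neg_add_cancel, Complex.exp_zero]
    rw [Complex.sin, mul_comm z I]
    linear_combination (I / 2) * hinv
  refine mul_right_cancel₀ (Complex.exp_ne_zero (I * z)) ?_
  rw [mul_assoc, hsin, idDivSin]
  rw [hsq] at h₂
  linear_combination (-I * (Complex.exp (I * z) + 1)) * h₁ + (I / 2) * h₂ -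
    z * Complex.exp (I * z) * I_mul_I

theorem sin_ne_zero_of_norm_lt_pi {z : ℂ} (hz₀ : z ≠ 0) (hz : ‖z‖ < π) : Complex.sin z ≠ 0 :=
  right_ne_zero_of_mul ((idDivSin_mul_sin hz).symm ▸ hz₀)

theorem idDivSin_of_ne_zero {z : ℂ} (hz₀ : z ≠ 0) (hz : ‖z‖ < π) :
    idDivSin z = z / Complex.sin z :=
  eq_div_of_mul_eq (sin_ne_zero_of_norm_lt_pi hz₀ hz) (idDivSin_mul_sin hz)

theorem idDivSin_neg {z : ℂ} (hz₀ : z ≠ 0) (hz : ‖z‖ < π) : idDivSin (-z) = idDivSin z := by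
  rw [idDivSin_of_ne_zero (neg_ne_zero.2 hz₀) (by rwa [norm_neg]), idDivSin_of_ne_zero hz₀ hz,
    Complex.sin_neg, neg_div_neg_eq]

theorem differentiableOn_idDivSin : DifferentiableOn ℂ idDivSin (ball 0 π) := by
  refine DifferentiableOn.sub (.const_mul ?_ 2) ?_ <;>
  refine differentiableOn_bernoulliGenFun.comp (by fun_prop) fun z hz ↦ ?_
  all_goals
    rw [mem_ball_zero_iff] at hz ⊢
    simp only [norm_mul, norm_I, RCLike.norm_ofNat]
    linarith [pi_pos]

theorem iteratedDeriv_idDivSin_zero (n : ℕ) :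
    iteratedDeriv n idDivSin 0 = I ^ n * (2 - 2 ^ n) * bernoulli n := by
  have hanalytic (c : ℂ) : AnalyticAt ℂ (fun z ↦ bernoulliGenFun (c * z)) 0 :=
    AnalyticAt.fun_comp (by simpa using analyticAt_bernoulliGenFun_zero) (by fun_prop)
  have hcoeff (c : ℂ) :
      iteratedDeriv n (fun z ↦ bernoulliGenFun (c * z)) 0 = c ^ n * bernoulli n := by
    rw [iteratedDeriv_comp_mul_left, mul_zero, iteratedDeriv_bernoulliGenFun_zero, smul_eq_mul]
  unfold idDivSin
  rw [iteratedDeriv_fun_sub (contDiffAt_const.mul (hanalytic I).contDiffAt)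
    (hanalytic (2 * I)).contDiffAt, iteratedDeriv_const_mul_field, hcoeff, hcoeff]
  ring

theorem circleAverage_inv_pow_smul {E : Type*} [NormedAddCommGroup E] [NormedSpace ℂ E]
    [CompleteSpace E] {f : ℂ → E} {c : ℂ} {R : ℝ} (hR : 0 < R)
    (hf : DifferentiableOn ℂ f (closedBall c R)) (n : ℕ) :
    circleAverage (fun z ↦ ((z - c) ^ n)⁻¹ • f z) c R = (n ! : ℂ)⁻¹ • iteratedDeriv n f c := by
  have hcauchy := hf.circleIntegral_one_div_sub_center_pow_smul hR n
  simp only [one_div, pow_succ', mul_inv, mul_smul] at hcauchy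
  rw [circleAverage_eq_circleIntegral hR.ne', hcauchy, div_eq_mul_inv, mul_smul, smul_smul,
    inv_mul_cancel₀ two_pi_I_ne_zero, one_smul]

theorem circleMap_zero_add_pi (R θ : ℝ) : circleMap 0 R (θ + π) = -circleMap 0 R θ := by
  simp [circleMap_zero, add_mul, Complex.exp_add]

theorem integral_comp_circleMap_of_even {E : Type*} [NormedAddCommGroup E] [NormedSpace ℝ E]
    {f : ℂ → E} {R : ℝ} (hf : CircleIntegrable f 0 R)
    (heven : ∀ z ∈ sphere 0 |R|, f (-z) = f z) (a : ℝ) :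
    ∫ θ in a..a + π, f (circleMap 0 R θ) = π • circleAverage f 0 R := by
  set g : ℝ → E := fun θ ↦ f (circleMap 0 R θ) with hg
  have hperiodic : Function.Periodic g π := fun θ ↦ by
    simp only [hg, circleMap_zero_add_pi, heven _ (circleMap_mem_sphere' 0 R θ)]
  have hint : ∀ s t, IntervalIntegrable g volume s t :=
    Function.Periodic.intervalIntegrable₀ ((periodic_circleMap 0 R).comp f) two_pi_pos.ne' hf
  have hdouble : ∫ θ in (0)..2 * π, g θ = (2 : ℝ) • ∫ θ in (0)..π, g θ := by
    simpa [← Int.cast_smul_eq_zsmul ℝ] using hperiodic.intervalIntegral_add_zsmul_eq 2 0 hint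
  have hconst : π * (2 * π)⁻¹ * 2 = 1 := by field_simp
  rw [hperiodic.intervalIntegral_add_eq a 0, zero_add, circleAverage_def, hdouble, smul_smul,
    smul_smul, hconst, one_smul]

theorem integral_add_comp_neg {E : Type*} [NormedAddCommGroup E] [NormedSpace ℝ E] {f : ℝ → E}
    {a : ℝ} (hf : IntervalIntegrable f volume (-a) a) :
    ∫ x in -a..a, (f x + f (-x)) = (2 : ℝ) • ∫ x in -a..a, f x := by
  have hf_neg : IntervalIntegrable (fun x ↦ f (-x)) volume (-a) a := by
    simpa using (IntervalIntegrable.iff_comp_neg (f := f)).1 hf.symm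
  rw [intervalIntegral.integral_add hf hf_neg, intervalIntegral.integral_comp_neg, neg_neg,
    two_smul]

theorem re_sin (z : ℂ) : (Complex.sin z).re = Real.sin z.re * Real.cosh z.im := by
  rw [Complex.sin_eq]
  simp [sin_ofReal_re, cosh_ofReal_re, cosh_ofReal_im, sinh_ofReal_im, cos_ofReal_im]

theorem im_sin (z : ℂ) : (Complex.sin z).im = Real.cos z.re * Real.sinh z.im := by
  rw [Complex.sin_eq]
  simp [sinh_ofReal_re, sinh_ofReal_im, cosh_ofReal_im, cos_ofReal_re]

theorem cosh_two_mul_im_sub_cos_two_mul_re (z : ℂ) :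
    Real.cosh (2 * z.im) - Real.cos (2 * z.re) = 2 * normSq (Complex.sin z) := by
  rw [normSq_apply, re_sin, im_sin, Real.cosh_two_mul, Real.cos_two_mul]
  linear_combination (2 * Real.cos z.re ^ 2 - 1) * Real.cosh_sq z.im -
    2 * Real.cosh z.im ^ 2 * Real.sin_sq_add_cos_sq z.re

theorem two_mul_re_exp_neg_mul_I_mul_conj_sin (z : ℂ) (α : ℝ) :
    2 * (Complex.exp ((-α : ℝ) * I) * conj (Complex.sin z)).re =
      Real.sin (z.re + α) * Real.exp (-z.im) + Real.sin (z.re - α) * Real.exp z.im := by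
  rw [mul_re, conj_re, conj_im, re_sin, im_sin, exp_ofReal_mul_I_re, exp_ofReal_mul_I_im,
    Real.cos_neg, Real.sin_neg, Real.sin_add, Real.sin_sub, Real.cosh_eq, Real.sinh_eq]
  ring

theorem re_exp_neg_mul_I_div_sin (z : ℂ) (α : ℝ) :
    (Complex.exp ((-α : ℝ) * I) / Complex.sin z).re =
      (Real.sin (z.re + α) * Real.exp (-z.im) + Real.sin (z.re - α) * Real.exp z.im) /
        (Real.cosh (2 * z.im) - Real.cos (2 * z.re)) := by
  rw [cosh_two_mul_im_sub_cos_two_mul_re, ← two_mul_re_exp_neg_mul_I_mul_conj_sin,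
    mul_div_mul_left _ _ two_ne_zero, div_eq_mul_inv, inv_def, ← mul_assoc, re_mul_ofReal,
    div_eq_mul_inv]

/-- The integrand `sin (Re z + (2n-1)θ) exp (-Im z) / (cosh (2 Im z) - cos (2 Re z))` at the point
`z = r exp (iθ)`, whose even part in `θ` is half the real part of `exp (-i(2n-1)θ) / sin z`. -/
noncomputable def arcIntegrand (r : ℝ) (n : ℕ) (θ : ℝ) : ℝ :=
  Real.sin (r * Real.cos θ + (2 * n - 1) * θ) * Real.exp (-r * Real.sin θ) /
    (Real.cosh (2 * r * Real.sin θ) - Real.cos (2 * r * Real.cos θ))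

theorem continuous_arcIntegrand {r : ℝ} (hr : 0 < r) (hrπ : r < π) (n : ℕ) :
    Continuous (arcIntegrand r n) := by
  refine Continuous.div (by fun_prop) (by fun_prop) fun θ ↦ ?_
  have hden := cosh_two_mul_im_sub_cos_two_mul_re (circleMap 0 r θ)
  rw [circleMap_zero_im, circleMap_zero_re, ← mul_assoc, ← mul_assoc] at hden
  have hsin : Complex.sin (circleMap 0 r θ) ≠ 0 :=
    sin_ne_zero_of_norm_lt_pi (circleMap_ne_center hr.ne') (by simpa [abs_of_pos hr])
  exact hden ▸ mul_ne_zero two_ne_zero (normSq_eq_zero.not.2 hsin)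

theorem arcIntegrand_add_neg (r : ℝ) (n : ℕ) (θ : ℝ) :
    arcIntegrand r n θ + arcIntegrand r n (-θ) =
      (Complex.exp ((-((2 * n - 1) * θ) : ℝ) * I) / Complex.sin (circleMap 0 r θ)).re := by
  rw [re_exp_neg_mul_I_div_sin, circleMap_zero_re, circleMap_zero_im, add_div]
  simp only [arcIntegrand, Real.cos_neg, Real.sin_neg, mul_neg, neg_mul, neg_neg, Real.cosh_neg,
    mul_assoc, sub_eq_add_neg]

theorem exp_div_sin_circleMap {r : ℝ} (hr : 0 < r) (hrπ : r < π) (n : ℕ) (θ : ℝ) :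
    Complex.exp ((-((2 * n - 1) * θ) : ℝ) * I) / Complex.sin (circleMap 0 r θ) =
      (r ^ (2 * n) / r : ℝ) *
        ((circleMap 0 r θ ^ (2 * n))⁻¹ * idDivSin (circleMap 0 r θ)) := by
  have hz₀ : circleMap 0 r θ ≠ 0 := circleMap_ne_center hr.ne'
  have hr₀ : (r : ℂ) ≠ 0 := ofReal_ne_zero.2 hr.ne'
  have hexp : Complex.exp ((-((2 * n - 1) * θ) : ℝ) * I) * Complex.exp (θ * I) ^ (2 * n) =
      Complex.exp (θ * I) := by
    rw [← Complex.exp_nat_mul, ← Complex.exp_add]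
    congr 1
    push_cast
    ring
  rw [idDivSin_of_ne_zero hz₀ (by simpa [abs_of_pos hr]), ← mul_div_assoc, ← mul_div_assoc]
  congr 1
  rw [eq_div_of_mul_eq (pow_ne_zero _ (Complex.exp_ne_zero _)) hexp, circleMap_zero, mul_pow]
  push_cast
  field_simp

theorem continuous_inv_pow_mul_idDivSin_circleMap {r : ℝ} (hr : 0 < r) (hrπ : r < π) (n : ℕ) :
    Continuous fun θ ↦ (circleMap 0 r θ ^ n)⁻¹ * idDivSin (circleMap 0 r θ) := by
  have hinv : Continuous fun θ ↦ (circleMap 0 r θ ^ n)⁻¹ :=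
    ((continuous_circleMap 0 r).pow n).inv₀ fun θ ↦ pow_ne_zero n (circleMap_ne_center hr.ne')
  refine hinv.mul (differentiableOn_idDivSin.continuousOn.comp_continuous
    (continuous_circleMap 0 r) fun θ ↦ ?_)
  exact sphere_subset_ball hrπ (circleMap_mem_sphere 0 hr.le θ)

theorem integral_inv_pow_mul_idDivSin {r : ℝ} (hr : 0 < r) (hrπ : r < π) (n : ℕ) :
    ∫ θ in -(π / 2)..π / 2, (circleMap 0 r θ ^ (2 * n))⁻¹ * idDivSin (circleMap 0 r θ) =
      (π * ((-1) ^ n * (2 - 2 ^ (2 * n)) * (bernoulli (2 * n) : ℝ) / (2 * n)!) : ℝ) := by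
  have heven (z : ℂ) (hz : z ∈ sphere 0 |r|) :
      ((-z) ^ (2 * n))⁻¹ * idDivSin (-z) = (z ^ (2 * n))⁻¹ * idDivSin z := by
    rw [abs_of_pos hr] at hz
    rw [(even_two_mul n).neg_pow, idDivSin_neg (ne_of_mem_sphere hz hr.ne')
      (by rwa [mem_sphere_zero_iff_norm.1 hz])]
  have hint : CircleIntegrable (fun z ↦ (z ^ (2 * n))⁻¹ * idDivSin z) 0 r :=
    (continuous_inv_pow_mul_idDivSin_circleMap hr hrπ (2 * n)).intervalIntegrable 0 (2 * π)
  have hhalf := integral_comp_circleMap_of_even hint heven (-(π / 2))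
  have hcauchy := circleAverage_inv_pow_smul hr
    (differentiableOn_idDivSin.mono (closedBall_subset_ball hrπ)) (2 * n)
  simp only [sub_zero, smul_eq_mul] at hcauchy
  rw [show -(π / 2) + π = π / 2 by ring, hcauchy, iteratedDeriv_idDivSin_zero, pow_mul I, I_sq]
    at hhalf
  rw [hhalf, real_smul]
  push_cast
  ring

theorem stmt_12_general (n : ℕ) {r : ℝ} (hr : 0 < r) (hrπ : r < π) :
    ∫ θ in -(π / 2)..π / 2,
        Real.sin (r * Real.cos θ + (2 * n - 1) * θ) * Real.exp (-r * Real.sin θ) /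
          (Real.cosh (2 * r * Real.sin θ) - Real.cos (2 * r * Real.cos θ)) =
      (-1) ^ n * (bernoulli (2 * n) : ℝ) * r ^ (2 * n) * (2 - 2 ^ (2 * n)) / (2 * n)! *
        (π / (2 * r)) := by
  have hdouble : 2 * ∫ θ in -(π / 2)..π / 2, arcIntegrand r n θ =
      r ^ (2 * n) / r * (π * ((-1) ^ n * (2 - 2 ^ (2 * n)) * bernoulli (2 * n) / (2 * n)!)) := by
    rw [← smul_eq_mul (2 : ℝ), ← integral_add_comp_neg
      ((continuous_arcIntegrand hr hrπ n).intervalIntegrable _ _)]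
    simp only [arcIntegrand_add_neg, exp_div_sin_circleMap hr hrπ, re_ofReal_mul]
    have hre : ∫ θ in -(π / 2)..π / 2,
          ((circleMap 0 r θ ^ (2 * n))⁻¹ * idDivSin (circleMap 0 r θ)).re =
        (∫ θ in -(π / 2)..π / 2,
          (circleMap 0 r θ ^ (2 * n))⁻¹ * idDivSin (circleMap 0 r θ)).re :=
      intervalIntegral.intervalIntegral_re
        ((continuous_inv_pow_mul_idDivSin_circleMap hr hrπ (2 * n)).intervalIntegrable _ _)
    rw [intervalIntegral.integral_const_mul, hre, integral_inv_pow_mul_idDivSin hr hrπ, ofReal_re]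
  change ∫ θ in -(π / 2)..π / 2, arcIntegrand r n θ = _
  field_simp at hdouble ⊢
  linear_combination hdouble

/-- For every `n ≥ 0`,
`∫_{-π/2}^{π/2} sin((π/2) cos θ + (2n-1)θ) e^{-(π/2) sin θ}
   / (cosh(π sin θ) - cos(π cos θ)) dθ = (-1)^n B_{2n} π^{2n} (2^{1-2n} - 1)/Γ(2n+1)`. -/
theorem stmt_12 (n : ℕ) :
    ∫ θ in (-(Real.pi/2))..(Real.pi/2),
        Real.sin (Real.pi/2 * Real.cos θ + (2 * (n : ℝ) - 1) * θ) *
          Real.exp (-(Real.pi/2) * Real.sin θ) /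
          (Real.cosh (Real.pi * Real.sin θ) - Real.cos (Real.pi * Real.cos θ))
      = (-1) ^ n * ((bernoulli (2*n) : ℚ) : ℝ) * Real.pi ^ (2*n) *
          ((2 : ℝ) ^ (1 - 2 * (n : ℤ)) - 1) / (Nat.factorial (2*n) : ℝ) := by
  have h := stmt_12_general n pi_div_two_pos (half_lt_self pi_pos)
  simp only [mul_div_cancel₀ π two_ne_zero, div_self pi_ne_zero, mul_one] at h
  have hpow : (2 : ℝ) ^ (2 * (n : ℤ)) = 2 ^ (2 * n) := by norm_cast
  rw [h, zpow_sub₀ two_ne_zero, zpow_one, hpow, div_pow]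
  field_simp
end
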